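/- arXiv:2211.15768 — 2 statements merged into one kernel-verified Lean document; each statement's English description precedes it below -/
import Mathlib

section
/- Let (ρ,u,∇π) be a smooth solution of the odd-viscosity system (OV) on [0,T]×ℝ², with ∇·u = 0. Then the quantity θ := ∇^⊥·(ρu) − Δρ satisfies the transport equation ∂_t θ + u·∇θ = (1/2) ∇^⊥ρ · ∇|u|² + ℬ(∇u, ∇²ρ), where for any divergence-free vector field v on ℝ² and scalar function α, ℬ(∇v,∇²α) := ∂₁∂₂α (∂₁v₂ + ∂₂v₁) + ∂₁v₁ (∂₁²α − ∂₂²α). -/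
/-!
Common framework: the plane `ℝ²`, classical differential operators, Fourier-side Sobolev
norms, Littlewood–Paley blocks, Chemin–Lerner norms, and the fluid systems of the paper
"Some remarks on the one-dimensional ... odd viscosity" formalisation.
-/

noncomputable section

open MeasureTheory Filter Set
open scoped ENNReal FourierTransform

/-- The plane `ℝ²`, as a Euclidean space. -/
abbrev V2 : Type := EuclideanSpace ℝ (Fin 2)

/-- Partial derivative in the `i`-th coordinate direction. -/
def pd (i : Fin 2) (f : V2 → ℝ) (x : V2) : ℝ :=
  fderiv ℝ f x (EuclideanSpace.single i 1)

/-- Partial derivative, for complex-valued functions. -/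
def pdC (i : Fin 2) (f : V2 → ℂ) (x : V2) : ℂ :=
  fderiv ℝ f x (EuclideanSpace.single i 1)

/-- Laplacian. -/
def lap (f : V2 → ℝ) (x : V2) : ℝ := pd 0 (pd 0 f) x + pd 1 (pd 1 f) x

/-- Divergence of a planar vector field. -/
def divg (u : V2 → V2) (x : V2) : ℝ :=
  pd 0 (fun y => u y 0) x + pd 1 (fun y => u y 1) x

/-- `j`-th component of the rotated field `u^⊥ = (-u₂, u₁)`. -/
def perpC (u : V2 → V2) (j : Fin 2) : V2 → ℝ :=
  if j = 0 then fun x => -(u x 1) else fun x => u x 0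

/-- Vorticity `∇^⊥ ⋅ u = ∂₁ u₂ - ∂₂ u₁`. -/
def curl2 (u : V2 → V2) (x : V2) : ℝ :=
  pd 0 (fun y => u y 1) x - pd 1 (fun y => u y 0) x

/-- Componentwise Laplacian of a vector field. -/
def lapV (u : V2 → V2) (x : V2) : V2 := WithLp.toLp 2 fun j => lap (fun y => u y j) x

/-- The bilinear operator `ℬ(∇v, ∇²α)`. -/
def Bop (v : V2 → V2) (α : V2 → ℝ) (x : V2) : ℝ :=
  pd 0 (pd 1 α) x * (pd 0 (fun y => v y 1) x + pd 1 (fun y => v y 0) x) +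
    pd 0 (fun y => v y 0) x * (pd 0 (pd 0 α) x - pd 1 (pd 1 α) x)

/-- A real function, seen as a complex-valued one. -/
def fC (f : V2 → ℝ) : V2 → ℂ := fun x => (f x : ℂ)

/-- The Sobolev `H^σ(ℝ²)` norm, defined via the Fourier transform. -/
def hNorm (σ : ℝ) (f : V2 → ℝ) : ℝ :=
  (∫ ξ : V2, (1 + ‖ξ‖ ^ 2) ^ σ * ‖𝓕 (fC f) ξ‖ ^ 2) ^ (1 / 2 : ℝ)

/-- Membership in the Sobolev space `H^σ(ℝ²)`. -/
def MemH (σ : ℝ) (f : V2 → ℝ) : Prop :=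
  MemLp f 2 (volume : Measure V2) ∧
    Integrable (fun ξ : V2 => (1 + ‖ξ‖ ^ 2) ^ σ * ‖𝓕 (fC f) ξ‖ ^ 2)
      (volume : Measure V2)

def hNormV (σ : ℝ) (u : V2 → V2) : ℝ :=
  hNorm σ (fun x => u x 0) + hNorm σ (fun x => u x 1)

def MemHV (σ : ℝ) (u : V2 → V2) : Prop :=
  MemH σ (fun x => u x 0) ∧ MemH σ (fun x => u x 1)

/-- `H^σ` norm of the gradient of a scalar function. -/
def hNormGrad (σ : ℝ) (f : V2 → ℝ) : ℝ := hNorm σ (pd 0 f) + hNorm σ (pd 1 f)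

def MemHGrad (σ : ℝ) (f : V2 → ℝ) : Prop := MemH σ (pd 0 f) ∧ MemH σ (pd 1 f)

/-- `L^p` norm of a scalar function (`p = ∞` allowed). -/
def lpN (p : ℝ≥0∞) (f : V2 → ℝ) : ℝ := (eLpNorm f p (volume : Measure V2)).toReal

def lpNV (p : ℝ≥0∞) (u : V2 → V2) : ℝ := (eLpNorm u p (volume : Measure V2)).toReal

/-- `L^∞` norm of the (full) gradient of a scalar function. -/
def gradSup (f : V2 → ℝ) : ℝ :=
  (eLpNorm (fun x => ‖fderiv ℝ f x‖) ⊤ (volume : Measure V2)).toReal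

def gradSupV (u : V2 → V2) : ℝ :=
  (eLpNorm (fun x => ‖fderiv ℝ u x‖) ⊤ (volume : Measure V2)).toReal

/-- `L^∞` norm of the Hessian of a scalar function. -/
def hessSup (f : V2 → ℝ) : ℝ :=
  (eLpNorm (fun x => ‖fderiv ℝ (fderiv ℝ f) x‖) ⊤ (volume : Measure V2)).toReal

/-- Continuity in time with values in `H^σ`, on the time set `S`. -/
def ContH (σ : ℝ) (S : Set ℝ) (f : ℝ → V2 → ℝ) : Prop :=
  (∀ t ∈ S, MemH σ (f t)) ∧
    ∀ t₀ ∈ S, Tendsto (fun t => hNorm σ (fun x => f t x - f t₀ x))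
      (nhdsWithin t₀ S) (nhds 0)

def ContHV (σ : ℝ) (S : Set ℝ) (u : ℝ → V2 → V2) : Prop :=
  ContH σ S (fun t x => u t x 0) ∧ ContH σ S (fun t x => u t x 1)

def ContHGrad (σ : ℝ) (S : Set ℝ) (π : ℝ → V2 → ℝ) : Prop :=
  ContH σ S (fun t => pd 0 (π t)) ∧ ContH σ S (fun t => pd 1 (π t))

/-- Continuity in time with values in `L²` (scalar case). -/
def ContL2 (S : Set ℝ) (f : ℝ → V2 → ℝ) : Prop :=
  (∀ t ∈ S, MemLp (f t) 2 (volume : Measure V2)) ∧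
    ∀ t₀ ∈ S, Tendsto (fun t => eLpNorm (fun x => f t x - f t₀ x) 2 (volume : Measure V2))
      (nhdsWithin t₀ S) (nhds 0)

/-- Continuity in time with values in `L²` (vector case). -/
def ContL2V (S : Set ℝ) (u : ℝ → V2 → V2) : Prop :=
  (∀ t ∈ S, MemLp (u t) 2 (volume : Measure V2)) ∧
    ∀ t₀ ∈ S, Tendsto (fun t => eLpNorm (fun x => u t x - u t₀ x) 2 (volume : Measure V2))
      (nhdsWithin t₀ S) (nhds 0)

/-- `∇·(ρ u ⊗ u)`, `j`-th component. -/
def momTensorDiv (ρ : V2 → ℝ) (u : V2 → V2) (j : Fin 2) (x : V2) : ℝ :=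
  pd 0 (fun y => ρ y * u y 0 * u y j) x + pd 1 (fun y => ρ y * u y 1 * u y j) x

/-- `∇·(ρ ∇u^⊥)`, `j`-th component. -/
def oddTermDiv (ρ : V2 → ℝ) (u : V2 → V2) (j : Fin 2) (x : V2) : ℝ :=
  pd 0 (fun y => ρ y * pd 0 (perpC u j) y) x + pd 1 (fun y => ρ y * pd 1 (perpC u j) y) x

/-- The odd-viscosity system (OV) on the time set `S`. -/
structure IsOVSolution (S : Set ℝ) (ρ : ℝ → V2 → ℝ) (u : ℝ → V2 → V2)
    (π : ℝ → V2 → ℝ) : Prop where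
  mass : ∀ t ∈ S, ∀ x : V2,
    deriv (fun s => ρ s x) t +
      (pd 0 (fun y => ρ t y * u t y 0) x + pd 1 (fun y => ρ t y * u t y 1) x) = 0
  momentum : ∀ t ∈ S, ∀ x : V2, ∀ j : Fin 2,
    deriv (fun s => ρ s x * u s x j) t + momTensorDiv (ρ t) (u t) j x +
      pd j (π t) x + oddTermDiv (ρ t) (u t) j x = 0
  incomp : ∀ t ∈ S, ∀ x : V2, divg (u t) x = 0

/-- The regularised odd-viscosity system, with hyperviscosity `+ ε Δ² u`. -/
structure IsOVepsSolution (ε : ℝ) (S : Set ℝ) (ρ : ℝ → V2 → ℝ) (u : ℝ → V2 → V2)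
    (π : ℝ → V2 → ℝ) : Prop where
  mass : ∀ t ∈ S, ∀ x : V2,
    deriv (fun s => ρ s x) t +
      (pd 0 (fun y => ρ t y * u t y 0) x + pd 1 (fun y => ρ t y * u t y 1) x) = 0
  momentum : ∀ t ∈ S, ∀ x : V2, ∀ j : Fin 2,
    deriv (fun s => ρ s x * u s x j) t + momTensorDiv (ρ t) (u t) j x +
      pd j (π t) x + oddTermDiv (ρ t) (u t) j x +
      ε * lap (lap fun y => u t y j) x = 0
  incomp : ∀ t ∈ S, ∀ x : V2, divg (u t) x = 0

/-- Space-time smoothness of a scalar function. -/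
def SmoothFn (f : ℝ → V2 → ℝ) : Prop := ContDiff ℝ (⊤ : ℕ∞) fun p : ℝ × V2 => f p.1 p.2

def SmoothFnV (u : ℝ → V2 → V2) : Prop := ContDiff ℝ (⊤ : ℕ∞) fun p : ℝ × V2 => u p.1 p.2

/-- `η = ∇^⊥ ⋅ (ρ u)`. -/
def etaFun (ρ : V2 → ℝ) (u : V2 → V2) (x : V2) : ℝ :=
  curl2 (fun y => WithLp.toLp 2 fun i => ρ y * u y i) x

/-- The good unknown `θ = η - Δρ`. -/
def thetaFun (ρ : V2 → ℝ) (u : V2 → V2) (x : V2) : ℝ := etaFun ρ u x - lap ρ x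

/-- The energy `E(t) = ‖ρ(t) - 1‖_{H^{s+1}} + ‖u(t)‖_{H^s}`. -/
def Een (s : ℝ) (ρ : ℝ → V2 → ℝ) (u : ℝ → V2 → V2) (t : ℝ) : ℝ :=
  hNorm (s + 1) (fun x => ρ t x - 1) + hNormV s (u t)

/-- The energy `F(t)` built on the good unknowns. -/
def Fen (s : ℝ) (ρ : ℝ → V2 → ℝ) (u : ℝ → V2 → V2) (t : ℝ) : ℝ :=
  lpN 2 (fun x => ρ t x - 1) + lpNV 2 (u t) +
    hNorm (s - 1) (thetaFun (ρ t) (u t)) + hNorm (s - 1) (curl2 (u t))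

/-- The time interval `[0, T]`, where `T = +∞` is allowed. -/
def timeSet (T : ℝ≥0∞) : Set ℝ := {t : ℝ | 0 ≤ t ∧ ENNReal.ofReal t ≤ T}

/-- The Bessel-type Fourier multiplier `Λ^σ = (Id - Δ)^{σ/2}`. -/
def Lam (σ : ℝ) (f : V2 → ℂ) : V2 → ℂ :=
  𝓕⁻ fun ξ => (((1 + ‖ξ‖ ^ 2) ^ (σ / 2) : ℝ) : ℂ) * 𝓕 f ξ

/-- Transport term `(v⋅∇)f`. -/
def adv (v : V2 → V2) (f : V2 → ℝ) (x : V2) : ℝ :=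
  v x 0 * pd 0 f x + v x 1 * pd 1 f x

/-- Transport term, complex-valued functions. -/
def advC (ζ : V2 → V2) (g : V2 → ℂ) (x : V2) : ℂ :=
  (ζ x 0 : ℂ) * pdC 0 g x + (ζ x 1 : ℂ) * pdC 1 g x

/-! ### Littlewood–Paley theory and Chemin–Lerner spaces -/

/-- A smooth radial cut-off, equal to `1` for `‖ξ‖ ≤ 1` and to `0` for `‖ξ‖ ≥ 2`. -/
def lpChi (ξ : V2) : ℝ := 1 - Real.smoothTransition (‖ξ‖ - 1)

/-- Littlewood–Paley symbols: index `0` is the low-frequency block `Δ₋₁`,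
index `k + 1` is the dyadic block `Δ_k`. -/
def lpSymb (k : ℕ) (ξ : V2) : ℝ :=
  if k = 0 then lpChi ξ
  else lpChi (((2 : ℝ) ^ (k - 1))⁻¹ • ξ) - lpChi (((2 : ℝ) ^ (k - 1))⁻¹ • ((2 : ℝ) • ξ))

/-- Littlewood–Paley block. -/
def lpBlock (k : ℕ) (f : V2 → ℂ) : V2 → ℂ :=
  𝓕⁻ fun ξ => (lpSymb k ξ : ℂ) * 𝓕 f ξ

/-- `‖Δ_j u‖_{L^q_T(L²)}` (block index `k` corresponds to `j = k - 1`). -/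
def blockNormT (k : ℕ) (q : ℝ≥0∞) (T : ℝ) (f : ℝ → V2 → ℂ) : ℝ≥0∞ :=
  eLpNorm (fun t => (eLpNorm (lpBlock k (f t)) 2 (volume : Measure V2)).toReal) q
    ((volume : Measure ℝ).restrict (Icc 0 T))

/-- Dyadic weight `2^{jσ}` for the block index `k` (recall `j = k - 1`). -/
def lpWeight (σ : ℝ) (k : ℕ) : ℝ≥0∞ :=
  ENNReal.ofReal ((2 : ℝ) ^ (((k : ℝ) - 1) * σ))

/-- The Chemin–Lerner norm `‖·‖_{L̃^q_T(H^σ)}`, complex scalar version. -/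
def clNormC (σ : ℝ) (q : ℝ≥0∞) (T : ℝ) (f : ℝ → V2 → ℂ) : ℝ≥0∞ :=
  (∑' k : ℕ, (lpWeight σ k * blockNormT k q T f) ^ 2) ^ (1 / 2 : ℝ)

def clNorm (σ : ℝ) (q : ℝ≥0∞) (T : ℝ) (f : ℝ → V2 → ℝ) : ℝ≥0∞ :=
  clNormC σ q T fun t x => (f t x : ℂ)

def clNormV (σ : ℝ) (q : ℝ≥0∞) (T : ℝ) (u : ℝ → V2 → V2) : ℝ≥0∞ :=
  clNorm σ q T (fun t x => u t x 0) + clNorm σ q T (fun t x => u t x 1)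

def clNormGrad (σ : ℝ) (q : ℝ≥0∞) (T : ℝ) (π : ℝ → V2 → ℝ) : ℝ≥0∞ :=
  clNorm σ q T (fun t => pd 0 (π t)) + clNorm σ q T (fun t => pd 1 (π t))

/-- Membership in `C̃_T(H^σ) = L̃^∞_T(H^σ) ∩ C([0,T];H^σ)` for a vector field. -/
def MemTildeC (σ : ℝ) (T : ℝ) (u : ℝ → V2 → V2) : Prop :=
  clNormV σ ⊤ T u < ⊤ ∧ ContHV σ (Icc 0 T) u

/-- The Besov `B¹_{2,∞}` norm. -/
def b21inf (f : V2 → ℝ) : ℝ≥0∞ :=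
  ⨆ k : ℕ, lpWeight 1 k * eLpNorm (lpBlock k (fC f)) 2 (volume : Measure V2)

/-- `‖∇v‖_{B¹_{2,∞} ∩ L^∞}`, summed over the entries of the Jacobian. -/
def jacBnorm (v : V2 → V2) : ℝ≥0∞ :=
  (∑ i : Fin 2, ∑ j : Fin 2, b21inf (pd i fun y => v y j)) +
    eLpNorm (fun x => ‖fderiv ℝ v x‖) ⊤ (volume : Measure V2)

/-- `‖∇v‖_{H^σ}`, summed over the entries of the Jacobian (extended-real valued). -/
def jacHnorm (σ : ℝ) (v : V2 → V2) : ℝ≥0∞ :=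
  ∑ i : Fin 2, ∑ j : Fin 2, ENNReal.ofReal (hNorm σ (pd i fun y => v y j))

/-- The quantity `V(T) = ∫₀^T V'(t) dt` of transport theory. -/
def Vquant (σ : ℝ) (T : ℝ) (v : ℝ → V2 → V2) : ℝ :=
  if σ < 2 then (∫⁻ t in Icc 0 T, jacBnorm (v t)).toReal
  else (∫⁻ t in Icc 0 T, jacHnorm (σ - 1) (v t)).toReal

/-- The hypothesis `∇v ∈ L¹([0,T]; B¹_{2,∞} ∩ L^∞)` (if `σ < 2`), resp.
`∇v ∈ L¹([0,T]; H^{σ-1})` (if `σ > 2`). -/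
def VCond (σ : ℝ) (T : ℝ) (v : ℝ → V2 → V2) : Prop :=
  (σ < 2 → (∫⁻ t in Icc 0 T, jacBnorm (v t)) < ⊤) ∧
    (2 < σ →
      (∀ t ∈ Icc 0 T, ∀ i j : Fin 2, MemH (σ - 1) (pd i fun y => v t y j)) ∧
        (∫⁻ t in Icc 0 T, jacHnorm (σ - 1) (v t)) < ⊤)

/-- `‖u‖_{L¹_T(L²)}`. -/
def l1L2V (T : ℝ) (u : ℝ → V2 → V2) : ℝ≥0∞ :=
  ∫⁻ t in Icc 0 T, eLpNorm (u t) 2 (volume : Measure V2)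

/-! ### Stokes-type systems -/

/-- The hyperviscous Stokes system with variable-coefficient odd term:
`∂ₜu + (v⋅∇)u + b∇Π + ν b Δ²u + b ∇·(h ∇u^⊥) = g`, with `h = b⁻¹`,
`∇·u = 0`, `u|₀ = u₀`. -/
def IsStokesVarSolution (ν T : ℝ) (b : ℝ → V2 → ℝ) (v : ℝ → V2 → V2)
    (g : ℝ → V2 → V2) (u₀ : V2 → V2) (u : ℝ → V2 → V2) (P : ℝ → V2 → ℝ) : Prop :=
  (∀ t ∈ Icc 0 T, ∀ x : V2, ∀ j : Fin 2,
    deriv (fun s => u s x j) t + adv (v t) (fun y => u t y j) x +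
      b t x * pd j (P t) x + ν * b t x * lap (lap fun y => u t y j) x +
      b t x *
        (pd 0 (fun y => (b t y)⁻¹ * pd 0 (perpC (u t) j) y) x +
          pd 1 (fun y => (b t y)⁻¹ * pd 1 (perpC (u t) j) y) x) = g t x j) ∧
    (∀ t ∈ Icc 0 T, ∀ x : V2, divg (u t) x = 0) ∧ ∀ x : V2, u 0 x = u₀ x

/-- The hyperviscous Stokes system with constant-coefficient odd term:
`∂ₜu + (v⋅∇)u + b∇Π + ν b Δ²u + Δu^⊥ = f`, `∇·u = 0`, `u|₀ = u₀`. -/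
def IsStokesConstSolution (ν T : ℝ) (b : ℝ → V2 → ℝ) (v : ℝ → V2 → V2)
    (f : ℝ → V2 → V2) (u₀ : V2 → V2) (u : ℝ → V2 → V2) (P : ℝ → V2 → ℝ) : Prop :=
  (∀ t ∈ Icc 0 T, ∀ x : V2, ∀ j : Fin 2,
    deriv (fun s => u s x j) t + adv (v t) (fun y => u t y j) x +
      b t x * pd j (P t) x + ν * b t x * lap (lap fun y => u t y j) x +
      lap (perpC (u t) j) x = f t x j) ∧
    (∀ t ∈ Icc 0 T, ∀ x : V2, divg (u t) x = 0) ∧ ∀ x : V2, u 0 x = u₀ x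

/-- The system `h(∂ₜu + (v⋅∇)u) + ∇Π + νΔ²u + ∇·(h∇u^⊥) = h g`, `∇·u = 0`,
`u|₀ = u₀`, on the time set `S`. -/
def IsStokesHSolutionOn (ν : ℝ) (S : Set ℝ) (h : ℝ → V2 → ℝ) (v : ℝ → V2 → V2)
    (g : ℝ → V2 → V2) (u₀ : V2 → V2) (u : ℝ → V2 → V2) (P : ℝ → V2 → ℝ) : Prop :=
  (∀ t ∈ S, ∀ x : V2, ∀ j : Fin 2,
    h t x * (deriv (fun s => u s x j) t + adv (v t) (fun y => u t y j) x) +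
      pd j (P t) x + ν * lap (lap fun y => u t y j) x +
      (pd 0 (fun y => h t y * pd 0 (perpC (u t) j) y) x +
        pd 1 (fun y => h t y * pd 1 (perpC (u t) j) y) x) = h t x * g t x j) ∧
    (∀ t ∈ S, ∀ x : V2, divg (u t) x = 0) ∧ ∀ x : V2, u 0 x = u₀ x


/-- Space-time smooth real functions. -/
def SmA : Subalgebra ℝ (ℝ × V2 → ℝ) where
  carrier := {f | ContDiff ℝ (⊤ : ℕ∞) f}
  mul_mem' := by
    intro a b ha hb
    exact ContDiff.mul (Set.mem_setOf_eq ▸ ha) (Set.mem_setOf_eq ▸ hb)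
  add_mem' := by
    intro a b ha hb
    exact ContDiff.add (Set.mem_setOf_eq ▸ ha) (Set.mem_setOf_eq ▸ hb)
  algebraMap_mem' := by
    intro r
    have h : ContDiff ℝ (⊤ : ℕ∞) (fun _ : ℝ × V2 => r) := contDiff_const
    exact h

theorem SmA_diff (F : SmA) : Differentiable ℝ F.1 :=
  ContDiff.differentiable (n := ((⊤ : ℕ∞) : WithTop ℕ∞)) F.2 (by simp)

/-- Directional derivative on smooth functions. -/
def DD (v : ℝ × V2) (F : SmA) : SmA :=
  ⟨fun p => fderiv ℝ F.1 p v, by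
    have h : ContDiff ℝ (⊤ : ℕ∞) (fderiv ℝ F.1) :=
      ContDiff.fderiv_right (m := ((⊤ : ℕ∞) : WithTop ℕ∞))
        (n := ((⊤ : ℕ∞) : WithTop ℕ∞)) F.2 (by simp)
    exact h.clm_apply contDiff_const⟩

theorem DD_add (v : ℝ × V2) (F G : SmA) : DD v (F + G) = DD v F + DD v G := by
  apply Subtype.ext
  funext p
  change fderiv ℝ (F.1 + G.1) p v = fderiv ℝ F.1 p v + fderiv ℝ G.1 p v
  rw [fderiv_add (SmA_diff F p) (SmA_diff G p)]
  rfl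

theorem DD_sub (v : ℝ × V2) (F G : SmA) : DD v (F - G) = DD v F - DD v G := by
  apply Subtype.ext
  funext p
  change fderiv ℝ (F.1 - G.1) p v = fderiv ℝ F.1 p v - fderiv ℝ G.1 p v
  rw [fderiv_sub (SmA_diff F p) (SmA_diff G p)]
  rfl

theorem DD_neg (v : ℝ × V2) (F : SmA) : DD v (-F) = -DD v F := by
  apply Subtype.ext
  funext p
  change fderiv ℝ (-F.1) p v = -fderiv ℝ F.1 p v
  rw [fderiv_neg]
  rfl

theorem DD_mul (v : ℝ × V2) (F G : SmA) : DD v (F * G) = F * DD v G + G * DD v F := by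
  apply Subtype.ext
  funext p
  change fderiv ℝ (F.1 * G.1) p v = F.1 p * fderiv ℝ G.1 p v + G.1 p * fderiv ℝ F.1 p v
  rw [fderiv_mul (SmA_diff F p) (SmA_diff G p)]
  rfl

theorem DD_comm (v w : ℝ × V2) (F : SmA) : DD v (DD w F) = DD w (DD v F) := by
  apply Subtype.ext
  funext p
  have h : ContDiff ℝ (⊤ : ℕ∞) (fderiv ℝ F.1) :=
    ContDiff.fderiv_right (m := ((⊤ : ℕ∞) : WithTop ℕ∞))
      (n := ((⊤ : ℕ∞) : WithTop ℕ∞)) F.2 (by simp)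
  have hd : DifferentiableAt ℝ (fderiv ℝ F.1) p :=
    (ContDiff.differentiable (n := ((⊤ : ℕ∞) : WithTop ℕ∞)) h (by simp)) p
  have key : ∀ a b : ℝ × V2, fderiv ℝ (fun q => fderiv ℝ F.1 q a) p b
      = fderiv ℝ (fderiv ℝ F.1) p b a := by
    intro a b
    rw [fderiv_clm_apply hd (differentiableAt_const a)]
    simp
  change fderiv ℝ (fun q => fderiv ℝ F.1 q w) p v = fderiv ℝ (fun q => fderiv ℝ F.1 q v) p w
  rw [key, key]
  have hs : IsSymmSndFDerivAt ℝ F.1 p :=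
    ContDiffAt.isSymmSndFDerivAt (n := ((⊤ : ℕ∞) : WithTop ℕ∞)) (ContDiff.contDiffAt F.2)
      (by
        rw [minSmoothness_of_isRCLikeNormedField]
        exact WithTop.coe_le_coe.2 (le_top : (2 : ℕ∞) ≤ ⊤))
  exact hs.eq v w

/-- Time derivative. -/
def Dt : SmA → SmA := DD (1, 0)
/-- First space derivative. -/
def D0 : SmA → SmA := DD (0, EuclideanSpace.single 0 1)
/-- Second space derivative. -/
def D1 : SmA → SmA := DD (0, EuclideanSpace.single 1 1)

theorem pd_slice (i : Fin 2) (F : SmA) (t : ℝ) (x : V2) :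
    pd i (fun y => F.1 (t, y)) x = (DD (0, EuclideanSpace.single i 1) F).1 (t, x) := by
  have h1 : HasFDerivAt (fun y : V2 => (t, y)) (ContinuousLinearMap.inr ℝ ℝ V2) x :=
    hasFDerivAt_prodMk_right t x
  have h2 := (SmA_diff F (t, x)).hasFDerivAt.comp x h1
  have h3 : HasFDerivAt (fun y => F.1 (t, y)) _ x := h2
  unfold pd
  rw [h3.fderiv]
  rfl

theorem pd0_slice (F : SmA) (t : ℝ) (x : V2) :
    pd 0 (fun y => F.1 (t, y)) x = (D0 F).1 (t, x) := pd_slice 0 F t x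
theorem pd1_slice (F : SmA) (t : ℝ) (x : V2) :
    pd 1 (fun y => F.1 (t, y)) x = (D1 F).1 (t, x) := pd_slice 1 F t x

theorem deriv_slice (F : SmA) (t : ℝ) (x : V2) :
    deriv (fun s => F.1 (s, x)) t = (Dt F).1 (t, x) := by
  have h1 : HasFDerivAt (fun s : ℝ => (s, x)) (ContinuousLinearMap.inl ℝ ℝ V2) t :=
    hasFDerivAt_prodMk_left t x
  have h2 := (SmA_diff F (t, x)).hasFDerivAt.comp t h1
  have h3 : HasFDerivAt (fun s => F.1 (s, x)) _ t := h2
  rw [h3.hasDerivAt.deriv]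
  rfl

theorem D0_zero {F : SmA} {t : ℝ} (h : ∀ x, F.1 (t, x) = 0) (x : V2) :
    (D0 F).1 (t, x) = 0 := by
  rw [← pd0_slice, show (fun y => F.1 (t, y)) = fun _ => 0 from funext h]
  simp [pd]
theorem D1_zero {F : SmA} {t : ℝ} (h : ∀ x, F.1 (t, x) = 0) (x : V2) :
    (D1 F).1 (t, x) = 0 := by
  rw [← pd1_slice, show (fun y => F.1 (t, y)) = fun _ => 0 from funext h]
  simp [pd]

theorem D0_add (F G : SmA) : D0 (F + G) = D0 F + D0 G := DD_add _ F G
theorem D1_add (F G : SmA) : D1 (F + G) = D1 F + D1 G := DD_add _ F G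
theorem Dt_add (F G : SmA) : Dt (F + G) = Dt F + Dt G := DD_add _ F G
theorem D0_sub (F G : SmA) : D0 (F - G) = D0 F - D0 G := DD_sub _ F G
theorem D1_sub (F G : SmA) : D1 (F - G) = D1 F - D1 G := DD_sub _ F G
theorem Dt_sub (F G : SmA) : Dt (F - G) = Dt F - Dt G := DD_sub _ F G
theorem D0_neg (F : SmA) : D0 (-F) = -D0 F := DD_neg _ F
theorem D1_neg (F : SmA) : D1 (-F) = -D1 F := DD_neg _ F
theorem D0_mul (F G : SmA) : D0 (F * G) = F * D0 G + G * D0 F := DD_mul _ F G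
theorem D1_mul (F G : SmA) : D1 (F * G) = F * D1 G + G * D1 F := DD_mul _ F G
theorem Dt_mul (F G : SmA) : Dt (F * G) = F * Dt G + G * Dt F := DD_mul _ F G
theorem D10 (F : SmA) : D1 (D0 F) = D0 (D1 F) := DD_comm _ _ F
theorem Dt0 (F : SmA) : Dt (D0 F) = D0 (Dt F) := DD_comm _ _ F
theorem Dt1 (F : SmA) : Dt (D1 F) = D1 (Dt F) := DD_comm _ _ F

/-- The good unknown `θ = ∇^⊥·(ρu) - Δρ` solves the transport equation
`∂ₜθ + u·∇θ = ½ ∇^⊥ρ·∇|u|² + ℬ(∇u, ∇²ρ)`. -/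
theorem theta_transport_equation
    (T : ℝ) (hT : 0 < T) (ρ : ℝ → V2 → ℝ) (u : ℝ → V2 → V2) (π : ℝ → V2 → ℝ)
    (hsmρ : SmoothFn ρ) (hsmu : SmoothFnV u) (hsmπ : SmoothFn π)
    (hsol : IsOVSolution (Icc 0 T) ρ u π) :
    ∀ t ∈ Icc 0 T, ∀ x : V2,
      deriv (fun s => thetaFun (ρ s) (u s) x) t +
          (u t x 0 * pd 0 (thetaFun (ρ t) (u t)) x +
            u t x 1 * pd 1 (thetaFun (ρ t) (u t)) x) =
        (1 / 2) *
            (-(pd 1 (ρ t) x) * pd 0 (fun y => u t y 0 ^ 2 + u t y 1 ^ 2) x +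
              pd 0 (ρ t) x * pd 1 (fun y => u t y 0 ^ 2 + u t y 1 ^ 2) x) +
          Bop (u t) (ρ t) x := by
  intro t ht
  let R : SmA := ⟨fun p => ρ p.1 p.2, hsmρ⟩
  let P : SmA := ⟨fun p => π p.1 p.2, hsmπ⟩
  have hc : ∀ i : Fin 2, ContDiff ℝ (⊤ : ℕ∞) fun p : ℝ × V2 => u p.1 p.2 i :=
    fun i => (contDiff_euclidean.1 hsmu) i
  let U : SmA := ⟨fun p => u p.1 p.2 0, hc 0⟩
  let V : SmA := ⟨fun p => u p.1 p.2 1, hc 1⟩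
  have mass : ∀ x, (Dt R + (D0 (R * U) + D1 (R * V))).1 (t, x) = 0 := by
    intro x
    have h := hsol.mass t ht x
    have e1 := deriv_slice R t x
    have e2 := pd0_slice (R * U) t x
    have e3 := pd1_slice (R * V) t x
    change (Dt R).1 (t, x) + ((D0 (R * U)).1 (t, x) + (D1 (R * V)).1 (t, x)) = 0
    rw [← e1, ← e2, ← e3]
    exact h
  have dv : ∀ x, (D0 U + D1 V).1 (t, x) = 0 := by
    intro x
    have h := hsol.incomp t ht x
    change (D0 U).1 (t, x) + (D1 V).1 (t, x) = 0
    rw [← pd0_slice, ← pd1_slice]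
    exact h
  have mom0 : ∀ x, (Dt (R * U) + (D0 (R * U * U) + D1 (R * V * U)) + D0 P +
      (D0 (R * D0 (-V)) + D1 (R * D1 (-V)))).1 (t, x) = 0 := by
    intro x
    have h := hsol.momentum t ht x 0
    have p0 : pd 0 (perpC (u t) 0) = fun y => (D0 (-V)).1 (t, y) :=
      funext fun y => pd0_slice (-V) t y
    have p1 : pd 1 (perpC (u t) 0) = fun y => (D1 (-V)).1 (t, y) :=
      funext fun y => pd1_slice (-V) t y
    unfold momTensorDiv oddTermDiv at h
    rw [p0, p1] at h
    change (Dt (R * U)).1 (t, x) + ((D0 (R * U * U)).1 (t, x) + (D1 (R * V * U)).1 (t, x)) +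
      (D0 P).1 (t, x) + ((D0 (R * D0 (-V))).1 (t, x) + (D1 (R * D1 (-V))).1 (t, x)) = 0
    rw [← deriv_slice, ← pd0_slice (R * U * U), ← pd1_slice (R * V * U), ← pd0_slice P,
      ← pd0_slice (R * D0 (-V)), ← pd1_slice (R * D1 (-V))]
    exact h
  have mom1 : ∀ x, (Dt (R * V) + (D0 (R * U * V) + D1 (R * V * V)) + D1 P +
      (D0 (R * D0 U) + D1 (R * D1 U))).1 (t, x) = 0 := by
    intro x
    have h := hsol.momentum t ht x 1
    have p0 : pd 0 (perpC (u t) 1) = fun y => (D0 U).1 (t, y) :=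
      funext fun y => pd0_slice U t y
    have p1 : pd 1 (perpC (u t) 1) = fun y => (D1 U).1 (t, y) :=
      funext fun y => pd1_slice U t y
    unfold momTensorDiv oddTermDiv at h
    rw [p0, p1] at h
    change (Dt (R * V)).1 (t, x) + ((D0 (R * U * V)).1 (t, x) + (D1 (R * V * V)).1 (t, x)) +
      (D1 P).1 (t, x) + ((D0 (R * D0 U)).1 (t, x) + (D1 (R * D1 U)).1 (t, x)) = 0
    rw [← deriv_slice, ← pd0_slice (R * U * V), ← pd1_slice (R * V * V), ← pd1_slice P,
      ← pd0_slice (R * D0 U), ← pd1_slice (R * D1 U)]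
    exact h
  have hρ0 : ∀ s, pd 0 (ρ s) = fun y => (D0 R).1 (s, y) := fun s => funext fun y => pd0_slice R s y
  have hρ1 : ∀ s, pd 1 (ρ s) = fun y => (D1 R).1 (s, y) := fun s => funext fun y => pd1_slice R s y
  have hu : ∀ x, pd 0 (fun y => u t y 1) x = (D0 V).1 (t, x) := fun x => pd0_slice V t x
  have hu' : ∀ x, pd 1 (fun y => u t y 0) x = (D1 U).1 (t, x) := fun x => pd1_slice U t x
  have hu'' : ∀ x, pd 0 (fun y => u t y 0) x = (D0 U).1 (t, x) := fun x => pd0_slice U t x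
  have hθ : ∀ s x, thetaFun (ρ s) (u s) x =
      ((D0 (R * V) - D1 (R * U)) - (D0 (D0 R) + D1 (D1 R))).1 (s, x) := by
    intro s x
    unfold thetaFun etaFun curl2 lap
    rw [hρ0, hρ1, pd0_slice, pd1_slice]
    have e1 := pd0_slice (R * V) s x
    have e2 := pd1_slice (R * U) s x
    change _ = ((D0 (R * V)).1 (s, x) - (D1 (R * U)).1 (s, x)) -
      ((D0 (D0 R)).1 (s, x) + (D1 (D1 R)).1 (s, x))
    rw [← e1, ← e2]
    rfl
  intro x
  have hθt : thetaFun (ρ t) (u t) = fun y =>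
      ((D0 (R * V) - D1 (R * U)) - (D0 (D0 R) + D1 (D1 R))).1 (t, y) := funext (hθ t)
  have hq0 : pd 0 (fun y => u t y 0 ^ 2 + u t y 1 ^ 2) x = (D0 (U * U + V * V)).1 (t, x) := by
    rw [← pd0_slice]
    congr 1
    funext y
    change _ = u t y 0 * u t y 0 + u t y 1 * u t y 1
    ring
  have hq1 : pd 1 (fun y => u t y 0 ^ 2 + u t y 1 ^ 2) x = (D1 (U * U + V * V)).1 (t, x) := by
    rw [← pd1_slice]
    congr 1
    funext y
    change _ = u t y 0 * u t y 0 + u t y 1 * u t y 1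
    ring
  unfold Bop
  rw [hθt, hq0, hq1, hρ0, hρ1, hu, hu', hu'']
  simp only [hθ]
  rw [deriv_slice, pd0_slice, pd1_slice, pd0_slice, pd0_slice, pd1_slice]
  change _ + (U.1 (t, x) * _ + V.1 (t, x) * _) = _
  have m00 := D1_zero mom0 x
  have m01 := D0_zero mom1 x
  have l0 := D0_zero (D0_zero mass) x
  have l1 := D1_zero (D1_zero mass) x
  have d := dv x
  have d0 := D0_zero dv x
  have d1 := D1_zero dv x
  clear_value R U V P
  clear hθ hθt hq0 hq1 hρ0 hρ1 hu hu' hu'' mass dv mom0 mom1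
  simp only [D0_add, D1_add, Dt_add, D0_sub, D1_sub, Dt_sub, D0_neg, D1_neg, D0_mul, D1_mul,
    Dt_mul, D10, Dt0, Dt1, Subalgebra.coe_add, Subalgebra.coe_sub, Subalgebra.coe_neg,
    Subalgebra.coe_mul, Pi.add_apply, Pi.sub_apply, Pi.neg_apply, Pi.mul_apply]
    at m00 m01 l0 l1 d d0 d1 ⊢
  linear_combination m01 - m00 - l0 - l1
    + d * ((D1 (D1 R)).1 (t, x) + (D0 (D0 R)).1 (t, x) + (D1 (D1 R)).1 (t, x)
      - 2 * (V.1 (t, x) * (D0 R).1 (t, x) - U.1 (t, x) * (D1 R).1 (t, x)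
      + R.1 (t, x) * ((D0 V).1 (t, x) - (D1 U).1 (t, x))))
    - d0 * (R.1 (t, x) * V.1 (t, x) - (D0 R).1 (t, x))
    + d1 * (R.1 (t, x) * U.1 (t, x) + (D1 R).1 (t, x))
end
end

section
/- Let (ρ,u,∇π) be a smooth solution of the odd-viscosity system (OV) on [0,T]×ℝ² with ρ ≥ ρ_* > 0. Then the vorticity ω := ∂₁u₂ − ∂₂u₁ satisfies ∂_t ω + u·∇ω + ∇^⊥(1/ρ)·∇π + ℬ(∇u, ∇² log ρ) = 0, and equivalently, using the cancellation ∇^⊥(1/ρ)·∇ρ = 0, the transport equation ∂_t ω + (u − ∇^⊥ log ρ)·∇ω = −∇^⊥(1/ρ)·∇(π − ρω) − ℬ(∇u, ∇² log ρ), where the vector field u − ∇^⊥ log ρ is divergence-free. -/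
/-!
Common framework: the plane `ℝ²`, classical differential operators, Fourier-side Sobolev
norms, Littlewood–Paley blocks, Chemin–Lerner norms, and the fluid systems of the paper
"Some remarks on the one-dimensional ... odd viscosity" formalisation.
-/

noncomputable section

open MeasureTheory Filter Set
open scoped ENNReal FourierTransform

/-- Smooth function on the plane. -/
def Sm (f : V2 → ℝ) : Prop := ContDiff ℝ (⊤ : ℕ∞) f

theorem Sm.diff {f : V2 → ℝ} (hf : Sm f) (x : V2) : DifferentiableAt ℝ f x :=
  (ContDiff.differentiable hf (by simp)) x

theorem Sm.pd {f : V2 → ℝ} (hf : Sm f) (i : Fin 2) : Sm (pd i f) := by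
  have h : ContDiff ℝ (⊤ : ℕ∞) (fderiv ℝ f) := ContDiff.fderiv_right hf (by simp)
  exact h.clm_apply contDiff_const

theorem Sm.add {f g : V2 → ℝ} (hf : Sm f) (hg : Sm g) : Sm (fun y => f y + g y) :=
  ContDiff.add hf hg

theorem Sm.sub {f g : V2 → ℝ} (hf : Sm f) (hg : Sm g) : Sm (fun y => f y - g y) :=
  ContDiff.sub hf hg

theorem Sm.mul {f g : V2 → ℝ} (hf : Sm f) (hg : Sm g) : Sm (fun y => f y * g y) :=
  ContDiff.mul hf hg

theorem Sm.neg {f : V2 → ℝ} (hf : Sm f) : Sm (fun y => - f y) :=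
  ContDiff.neg hf

theorem Sm.inv {f : V2 → ℝ} (hf : Sm f) (h0 : ∀ x, f x ≠ 0) : Sm (fun y => (f y)⁻¹) :=
  ContDiff.inv hf h0

theorem Sm.log {f : V2 → ℝ} (hf : Sm f) (h0 : ∀ x, f x ≠ 0) : Sm (fun y => Real.log (f y)) :=
  ContDiff.log hf h0

theorem pd_add {f g : V2 → ℝ} (hf : Sm f) (hg : Sm g) (i : Fin 2) (x : V2) :
    pd i (fun y => f y + g y) x = pd i f x + pd i g x := by
  simp only [pd]
  rw [fderiv_fun_add (hf.diff x) (hg.diff x)]; rfl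

theorem pd_sub {f g : V2 → ℝ} (hf : Sm f) (hg : Sm g) (i : Fin 2) (x : V2) :
    pd i (fun y => f y - g y) x = pd i f x - pd i g x := by
  simp only [pd]
  rw [fderiv_fun_sub (hf.diff x) (hg.diff x)]; rfl

theorem pd_neg (f : V2 → ℝ) (i : Fin 2) (x : V2) :
    pd i (fun y => - f y) x = - pd i f x := by
  simp only [pd]
  rw [fderiv_fun_neg]; rfl

theorem pd_mul {f g : V2 → ℝ} (hf : Sm f) (hg : Sm g) (i : Fin 2) (x : V2) :
    pd i (fun y => f y * g y) x = f x * pd i g x + g x * pd i f x := by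
  simp only [pd]
  rw [fderiv_fun_mul (hf.diff x) (hg.diff x)]; simp

theorem pd_inv {f : V2 → ℝ} (hf : Sm f) (h0 : ∀ x, f x ≠ 0) (i : Fin 2) (x : V2) :
    pd i (fun y => (f y)⁻¹) x = - (f x)⁻¹ * (f x)⁻¹ * pd i f x := by
  have h := ((hasDerivAt_inv (h0 x)).comp_hasFDerivAt x (hf.diff x).hasFDerivAt).fderiv
  simp only [pd]
  change fderiv ℝ ((fun z : ℝ => z⁻¹) ∘ f) x _ = _
  erw [h]
  rw [ContinuousLinearMap.smul_apply, smul_eq_mul, pow_two, mul_inv]; ring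

theorem pd_log {f : V2 → ℝ} (hf : Sm f) (h0 : ∀ x, f x ≠ 0) (i : Fin 2) (x : V2) :
    pd i (fun y => Real.log (f y)) x = (f x)⁻¹ * pd i f x := by
  have h := ((hf.diff x).hasFDerivAt.log (h0 x)).fderiv
  simp only [pd]
  rw [h]; simp

theorem pd_comm {f : V2 → ℝ} (hf : Sm f) (i j : Fin 2) (x : V2) :
    pd i (pd j f) x = pd j (pd i f) x := by
  have h : ContDiff ℝ (⊤ : ℕ∞) (fderiv ℝ f) := ContDiff.fderiv_right hf (by simp)
  have hd := (h.differentiable (by simp)) x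
  have key : ∀ v w : V2, fderiv ℝ (fun y => fderiv ℝ f y v) x w
      = fderiv ℝ (fderiv ℝ f) x w v := by
    intro v w
    rw [fderiv_clm_apply hd (by fun_prop)]; simp
  have hs : IsSymmSndFDerivAt ℝ f x :=
    (ContDiff.contDiffAt hf).isSymmSndFDerivAt (by simp; exact WithTop.coe_le_coe.mpr le_top)
  change fderiv ℝ (fun y => fderiv ℝ f y _) x _ = fderiv ℝ (fun y => fderiv ℝ f y _) x _
  rw [key, key]
  exact hs _ _

theorem Sm.slice {F : ℝ → V2 → ℝ} (hF : SmoothFn F) (t : ℝ) : Sm (F t) := by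
  unfold SmoothFn at hF
  exact hF.comp (contDiff_const.prodMk contDiff_id : ContDiff ℝ _ (fun y : V2 => (t, y)))

theorem SmoothFn.diffT {F : ℝ → V2 → ℝ} (hF : SmoothFn F) (t : ℝ) (x : V2) :
    DifferentiableAt ℝ (fun s => F s x) t := by
  unfold SmoothFn at hF
  have := hF.comp (contDiff_id.prodMk contDiff_const : ContDiff ℝ _ (fun s : ℝ => (s, x)))
  exact (this.differentiable (by simp)) t

theorem SmoothFn.dt_eq {F : ℝ → V2 → ℝ} (hF : SmoothFn F) (t : ℝ) (x : V2) :
    deriv (fun s => F s x) t = fderiv ℝ (fun p : ℝ × V2 => F p.1 p.2) (t, x) (1, 0) := by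
  unfold SmoothFn at hF
  have h1 := ((hF.differentiable (by simp)) (t, x)).hasFDerivAt
  have h2 : HasDerivAt (fun s : ℝ => (s, x)) ((1 : ℝ), (0 : V2)) t :=
    (hasDerivAt_id t).prodMk (hasDerivAt_const t x)
  exact (h1.comp_hasDerivAt t h2).deriv

theorem SmoothFn.pd_eq {F : ℝ → V2 → ℝ} (hF : SmoothFn F) (i : Fin 2) (t : ℝ) (x : V2) :
    pd i (F t) x = fderiv ℝ (fun p : ℝ × V2 => F p.1 p.2) (t, x)
      (0, EuclideanSpace.single i 1) := by
  unfold SmoothFn at hF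
  have h1 := ((hF.differentiable (by simp)) (t, x)).hasFDerivAt
  have h2 : HasFDerivAt (fun y : V2 => (t, y)) (ContinuousLinearMap.inr ℝ ℝ V2) x :=
    hasFDerivAt_prodMk_right t x
  have h3 := (h1.comp x h2).fderiv
  unfold pd
  change fderiv ℝ ((fun p : ℝ × V2 => F p.1 p.2) ∘ fun y : V2 => (t, y)) x _ = _
  rw [h3]; simp

theorem SmoothFn.dir {F : ℝ → V2 → ℝ} (hF : SmoothFn F) (v : ℝ × V2) :
    SmoothFn (fun t x => fderiv ℝ (fun p : ℝ × V2 => F p.1 p.2) (t, x) v) := by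
  unfold SmoothFn at *
  have h : ContDiff ℝ (⊤ : ℕ∞) (fderiv ℝ (fun p : ℝ × V2 => F p.1 p.2)) :=
    ContDiff.fderiv_right hF (by simp)
  exact h.clm_apply contDiff_const

theorem SmoothFn.pdS {F : ℝ → V2 → ℝ} (hF : SmoothFn F) (i : Fin 2) :
    SmoothFn (fun t => pd i (F t)) := by
  have := hF.dir (0, EuclideanSpace.single i 1)
  convert this using 3 with t x
  exact hF.pd_eq i t x

theorem SmoothFn.dtS {F : ℝ → V2 → ℝ} (hF : SmoothFn F) :
    SmoothFn (fun t x => deriv (fun s => F s x) t) := by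
  have := hF.dir (1, 0)
  convert this using 3 with t x
  exact hF.dt_eq t x

theorem SmoothFn.dt_pd {F : ℝ → V2 → ℝ} (hF : SmoothFn F) (i : Fin 2) (t : ℝ) (x : V2) :
    deriv (fun s => pd i (F s) x) t = pd i (fun y => deriv (fun s => F s y) t) x := by
  rw [(hF.pdS i).dt_eq, hF.dtS.pd_eq i]
  simp only [hF.pd_eq, hF.dt_eq]
  unfold SmoothFn at hF
  have h : ContDiff ℝ (⊤ : ℕ∞) (fderiv ℝ (fun p : ℝ × V2 => F p.1 p.2)) :=
    ContDiff.fderiv_right hF (by simp)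
  have hd := (h.differentiable (by simp)) (t, x)
  have key : ∀ v w : ℝ × V2,
      fderiv ℝ (fun y : ℝ × V2 => fderiv ℝ (fun p : ℝ × V2 => F p.1 p.2) (y.1, y.2) v) (t, x) w
      = fderiv ℝ (fderiv ℝ (fun p : ℝ × V2 => F p.1 p.2)) (t, x) w v := by
    intro v w
    change fderiv ℝ (fun y : ℝ × V2 => fderiv ℝ (fun p : ℝ × V2 => F p.1 p.2) y v) (t, x) w = _
    rw [fderiv_clm_apply hd (by fun_prop)]; simp
  have hs : IsSymmSndFDerivAt ℝ (fun p : ℝ × V2 => F p.1 p.2) (t, x) :=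
    hF.contDiffAt.isSymmSndFDerivAt (by simp; exact WithTop.coe_le_coe.mpr le_top)
  rw [key, key]
  exact hs _ _

/-- Non-conservative momentum equation, from the conservative one. -/
theorem mom_aux {r a b c w p M A R : V2 → ℝ} (hr : Sm r) (ha : Sm a) (hb : Sm b) (hc : Sm c)
    (hw : Sm w) (h0 : ∀ x, r x ≠ 0) (x : V2) (j : Fin 2)
    (hmass : R x + (pd 0 (fun y => r y * a y) x + pd 1 (fun y => r y * b y) x) = 0)
    (hM : M x = R x * c x + r x * A x)
    (hmom : M x + (pd 0 (fun y => r y * a y * c y) x + pd 1 (fun y => r y * b y * c y) x) +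
      pd j p x + (pd 0 (fun y => r y * pd 0 w y) x + pd 1 (fun y => r y * pd 1 w y) x) = 0) :
    A x = -(a x * pd 0 c x + b x * pd 1 c x + (r x)⁻¹ * pd j p x +
      (pd 0 (pd 0 w) x + pd 1 (pd 1 w) x) +
      (pd 0 (fun y => Real.log (r y)) x * pd 0 w x +
        pd 1 (fun y => Real.log (r y)) x * pd 1 w x)) := by
  rw [pd_log hr h0, pd_log hr h0]
  rw [pd_mul (hr.mul ha) hc, pd_mul (hr.mul hb) hc, pd_mul hr (hw.pd 0), pd_mul hr (hw.pd 1)]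
    at hmom
  have hx := h0 x
  field_simp
  linear_combination hmom - c x * hmass - hM

/-- Equations for the vorticity `ω = ∂₁u₂ - ∂₂u₁`, the cancellation
`∇^⊥(1/ρ)·∇ρ = 0`, the transport form of the vorticity equation, and the fact that
`u - ∇^⊥ log ρ` is divergence-free. -/
theorem vorticity_equations
    (T : ℝ) (hT : 0 < T) (ρ : ℝ → V2 → ℝ) (u : ℝ → V2 → V2) (π : ℝ → V2 → ℝ)
    (hsmρ : SmoothFn ρ) (hsmu : SmoothFnV u) (hsmπ : SmoothFn π)
    (hsol : IsOVSolution (Icc 0 T) ρ u π)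
    (ρstar : ℝ) (hρstar : 0 < ρstar)
    (hρlow : ∀ t ∈ Icc 0 T, ∀ x : V2, ρstar ≤ ρ t x) :
    ∀ t ∈ Icc 0 T, ∀ x : V2,
      (deriv (fun s => curl2 (u s) x) t +
          (u t x 0 * pd 0 (curl2 (u t)) x + u t x 1 * pd 1 (curl2 (u t)) x) +
          (-(pd 1 (fun y => (ρ t y)⁻¹) x) * pd 0 (π t) x +
            pd 0 (fun y => (ρ t y)⁻¹) x * pd 1 (π t) x) +
          Bop (u t) (fun y => Real.log (ρ t y)) x = 0) ∧
      (-(pd 1 (fun y => (ρ t y)⁻¹) x) * pd 0 (ρ t) x +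
          pd 0 (fun y => (ρ t y)⁻¹) x * pd 1 (ρ t) x = 0) ∧
      (deriv (fun s => curl2 (u s) x) t +
          ((u t x 0 + pd 1 (fun y => Real.log (ρ t y)) x) * pd 0 (curl2 (u t)) x +
            (u t x 1 - pd 0 (fun y => Real.log (ρ t y)) x) * pd 1 (curl2 (u t)) x) =
        -(-(pd 1 (fun y => (ρ t y)⁻¹) x) *
              pd 0 (fun y => π t y - ρ t y * curl2 (u t) y) x +
            pd 0 (fun y => (ρ t y)⁻¹) x *
              pd 1 (fun y => π t y - ρ t y * curl2 (u t) y) x) -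
          Bop (u t) (fun y => Real.log (ρ t y)) x) ∧
      divg (fun y => WithLp.toLp 2 fun i => if i = 0 then u t y 0 + pd 1 (fun z => Real.log (ρ t z)) y
        else u t y 1 - pd 0 (fun z => Real.log (ρ t z)) y) x = 0 := by
  intro t ht x
  have hu : ∀ j : Fin 2, SmoothFn (fun s y => u s y j) := by
    intro j
    unfold SmoothFnV at hsmu
    unfold SmoothFn
    fun_prop
  have h0 : ∀ y, ρ t y ≠ 0 := fun y => (lt_of_lt_of_le hρstar (hρlow t ht y)).ne'
  have hr : Sm (ρ t) := Sm.slice hsmρ t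
  have hp : Sm (π t) := Sm.slice hsmπ t
  have ha : Sm (fun y => u t y 0) := Sm.slice (hu 0) t
  have hb : Sm (fun y => u t y 1) := Sm.slice (hu 1) t
  have hmass := hsol.mass t ht
  have hinc : ∀ y, pd 0 (fun y => u t y 0) y + pd 1 (fun y => u t y 1) y = 0 := hsol.incomp t ht
  have hM : ∀ (j : Fin 2) (y : V2), deriv (fun s => ρ s y * u s y j) t
      = deriv (fun s => ρ s y) t * u t y j + ρ t y * deriv (fun s => u s y j) t := by
    intro j y
    exact deriv_fun_mul (hsmρ.diffT t y) ((hu j).diffT t y)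
  have e0 := fun y => mom_aux (R := fun y => deriv (fun s => ρ s y) t)
    (M := fun y => deriv (fun s => ρ s y * u s y 0) t)
    (A := fun y => deriv (fun s => u s y 0) t) hr ha hb ha hb.neg h0 y 0
    (hmass y) (hM 0 y) (hsol.momentum t ht y 0)
  have e1 := fun y => mom_aux (R := fun y => deriv (fun s => ρ s y) t)
    (M := fun y => deriv (fun s => ρ s y * u s y 1) t)
    (A := fun y => deriv (fun s => u s y 1) t) hr ha hb hb ha h0 y 1
    (hmass y) (hM 1 y) (hsol.momentum t ht y 1)
  have hω : deriv (fun s => curl2 (u s) x) t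
      = pd 0 (fun y => deriv (fun s => u s y 1) t) x
        - pd 1 (fun y => deriv (fun s => u s y 0) t) x := by
    unfold curl2
    rw [deriv_fun_sub (((hu 1).pdS 0).diffT t x) (((hu 0).pdS 1).diffT t x),
      (hu 1).dt_pd, (hu 0).dt_pd]
  have hcurl : curl2 (u t) = fun y => pd 0 (fun y => u t y 1) y - pd 1 (fun y => u t y 0) y := rfl
  simp only [e0, e1] at hω
  have hL : Sm (fun y => Real.log (ρ t y)) := hr.log h0
  have hI : Sm (fun y => (ρ t y)⁻¹) := hr.inv h0
  have hdL : ∀ i y, pd i (fun y => Real.log (ρ t y)) y = (ρ t y)⁻¹ * pd i (ρ t) y := pd_log hr h0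
  have hdI := fun i => pd_inv hr h0 i x
  have hinc1 : pd 1 (fun y => u t y 1) = fun y => - pd 0 (fun y => u t y 0) y := by
    funext y; linarith [hinc y]
  set a := fun y => u t y 0 with ha'
  set b := fun y => u t y 1 with hb'
  set L := fun y => Real.log (ρ t y) with hL'
  set I := fun y => (ρ t y)⁻¹ with hI'
  set r := ρ t with hr'
  set p := π t with hp'
  change deriv (fun s => curl2 (u s) x) t =
    pd 0 (fun y => -(a y * pd 0 b y + b y * pd 1 b y + I y * pd 1 p y +
      (pd 0 (pd 0 a) y + pd 1 (pd 1 a) y) + (pd 0 L y * pd 0 a y + pd 1 L y * pd 1 a y))) x -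
    pd 1 (fun y => -(a y * pd 0 a y + b y * pd 1 a y + I y * pd 0 p y +
      (pd 0 (pd 0 (fun y => - b y)) y + pd 1 (pd 1 (fun y => - b y)) y) +
      (pd 0 L y * pd 0 (fun y => - b y) y + pd 1 L y * pd 1 (fun y => - b y) y))) x at hω
  have n1 : ∀ i, pd i (fun y => - b y) = fun y => - pd i b y := fun i => funext (pd_neg b i)
  have main : deriv (fun s => curl2 (u s) x) t +
          (a x * pd 0 (curl2 (u t)) x + b x * pd 1 (curl2 (u t)) x) +
          (-(pd 1 I x) * pd 0 p x + pd 0 I x * pd 1 p x) +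
          Bop (u t) L x = 0 := by
    rw [hω, hcurl]
    unfold Bop
    change _ + _ + _ + (pd 0 (pd 1 L) x * (pd 0 b x + pd 1 a x) +
      pd 0 a x * (pd 0 (pd 0 L) x - pd 1 (pd 1 L) x)) = 0
    have c1 := pd_comm hp 0 1 x
    have c2 := pd_comm hL 0 1 x
    have c3 : ∀ y, pd 1 (pd 0 a) y = pd 0 (pd 1 a) y := fun y => pd_comm ha 1 0 y
    have c4 : pd 1 (pd 0 b) = fun y => - pd 0 (pd 0 a) y := by
      funext y
      rw [pd_comm hb 1 0 y, hinc1, pd_neg]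
    have c5 : pd 0 (pd 1 (pd 1 a)) x = pd 1 (pd 0 (pd 1 a)) x := pd_comm (ha.pd 1) 0 1 x
    have c6 : pd 1 (pd 0 (pd 0 b)) x = - pd 0 (pd 0 (pd 0 a)) x := by
      rw [pd_comm (hb.pd 0) 1 0 x, c4, pd_neg]
    simp (discharger := (repeat' first | assumption | apply Sm.neg | apply Sm.add | apply Sm.sub | apply Sm.mul | apply Sm.pd)) only [n1, pd_add, pd_sub, pd_mul, pd_neg, hinc1, c4, c5, c6, c1, c2, c3]
    ring
  have canc : -(pd 1 I x) * pd 0 r x + pd 0 I x * pd 1 r x = 0 := by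
    rw [hdI, hdI]; ring
  have hcS : Sm (curl2 (u t)) := by rw [hcurl]; exact (hb.pd 0).sub (ha.pd 1)
  refine ⟨main, canc, ?_, ?_⟩
  · change _ + ((a x + _) * _ + (b x - _) * _) = _
    have hx := h0 x
    have hIr : r x * (r x)⁻¹ = 1 := mul_inv_cancel₀ hx
    rw [pd_sub hp (hr.mul hcS), pd_sub hp (hr.mul hcS), pd_mul hr hcS, pd_mul hr hcS, hdL, hdL]
    rw [hdI, hdI] at main ⊢
    linear_combination main + (-(r x)⁻¹ * (pd 1 r x * pd 0 (curl2 (u t)) x - pd 0 r x * pd 1 (curl2 (u t)) x)) * hIr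
  · unfold divg
    change pd 0 (fun y => a y + pd 1 L y) x + pd 1 (fun y => b y - pd 0 L y) x = 0
    rw [pd_add ha (hL.pd 1), pd_sub hb (hL.pd 0), pd_comm hL 0 1]
    linear_combination hinc x
end
end
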